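/- Let G be a cycle with 2m+1 vertices (m ≥ 1) and let I_c(G) be its complementary edge ideal. Then pd(I_c(G)^s) = 2s for s ∈ [m], and pd(I_c(G)^s) = 2m for all s > m. -/

import Mathlib

/-!
The multidegree-`a` strand of the Koszul complex of `I = I_c(G)^s` is the augmented chain complex of
the simplicial complex `Δ_a = {F : F ≤ a, x^(a-F) ∈ I}`. With `n = 2m+1`, the theorem says that the
largest `i` for which some `Δ_a` has homology on faces of cardinality `i` is `2 min(s, m)`.

Upper bound (`not_nontrivial_of_lt`). Every monomial of `I` is divisible by a product of `s`
generators, whose exponents are at most `s` and whose degree is `s(n-2)`. If `a_j > s` for some `j`,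
then `Δ_a` is a cone with apex `j`, hence acyclic. Otherwise `deg a ≤ sn`, and a face `F` satisfies
`sn - |F| ≥ s(n-2)`, so `|F| ≤ 2s`. Finally there is no homology on faces of cardinality at least
`n`, since the only such subset, `[n]`, has nonzero boundary.

Lower bound (`nontrivial_of_le`). Let `t = min(s, m)` and let `x^a = x_{[n]}^t u^(s-t)` for one
generator `u`. By degree, faces of `Δ_a` have at most `2t` elements, and every disjoint union of `t`
edges of the cycle is a face. These unions are, by Gale's evenness condition, the facets of the
cyclic polytope of dimension `2t` with `n` vertices, so they carry a nonzero cycle. Explicitly, it is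
the component of cardinality `2t` of the exterior product of all `1 + e_i ∧ e_{i+1}`, `i ∈ ℤ/n`.
The boundary `∂` is an antiderivation with `∂ e_i = 1`, so the boundary of the product of the
factors `i < k` is `(e_k - e_0)` times that product (`bd_cyc`), which vanishes for `k = n`. Being a
nonzero cycle in the top dimension, it is not a boundary. The construction works in every
characteristic.
-/

open MvPolynomial

namespace Paper

noncomputable section

variable (K : Type) [Field K] (n : ℕ)

/-- The polynomial ring `S = K[x_1, …, x_n]`. -/
abbrev S := MvPolynomial (Fin n) K

variable {n}

/-- The squarefree exponent vector of a subset `F ⊆ [n]`. -/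
def expF (F : Finset (Fin n)) : Fin n →₀ ℕ := ∑ j ∈ F, Finsupp.single j 1

variable {K}

/-- Basis of the multidegree-`a` component of the `i`-th term of the Koszul
complex of `x_1, …, x_n` tensored with the ideal `I`:  subsets `F` of
cardinality `i` such that `x^(a - ε_F) ∈ I`. -/
abbrev KB (I : Ideal (S K n)) (a : Fin n →₀ ℕ) (i : ℕ) : Type :=
  {F : Finset (Fin n) // F.card = i ∧ expF F ≤ a ∧
    (monomial (a - expF F) (1 : K) : S K n) ∈ I}

/-- The Koszul differential (in multidegree `a`) from homological degree
`i+1` to `i`. -/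
def kd (I : Ideal (S K n)) (a : Fin n →₀ ℕ) (i : ℕ) :
    (KB I a (i + 1) →₀ K) →ₗ[K] (KB I a i →₀ K) :=
  Finsupp.lsum K fun F =>
    LinearMap.toSpanSingleton K _
      (∑ j ∈ F.1.attach,
        ((-1 : K) ^ ((F.1.filter (fun x => x < j.1)).card)) •
          Finsupp.single
            (⟨F.1.erase j.1, by
              obtain ⟨hcard, hle, hmem⟩ := F.2
              have hj : j.1 ∈ F.1 := j.2
              have herase : expF (F.1.erase j.1) + Finsupp.single j.1 1 = expF F.1 := by
                simpa [expF] using Finset.sum_erase_add F.1 (fun k => Finsupp.single k (1:ℕ)) hj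
              refine ⟨by simp [Finset.card_erase_of_mem hj, hcard], ?_, ?_⟩
              · refine le_trans ?_ hle
                rw [← herase]; exact le_add_of_nonneg_right bot_le
              · have h1 : Finsupp.single j.1 1 ≤ expF F.1 := by
                  rw [← herase]; exact le_add_of_nonneg_left bot_le
                have key : a - expF (F.1.erase j.1) =
                    (a - expF F.1) + Finsupp.single j.1 1 := by
                  have : expF (F.1.erase j.1) = expF F.1 - Finsupp.single j.1 1 := by
                    rw [← herase]; simp
                  rw [this, tsub_tsub_assoc hle h1]
                rw [key]
                have : (monomial ((a - expF F.1) + Finsupp.single j.1 1) (1:K) : S K n)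
                    = (monomial (a - expF F.1) (1:K)) * (monomial (Finsupp.single j.1 1) (1:K)) := by
                  rw [monomial_mul, mul_one]
                rw [this]
                exact Ideal.mul_mem_right _ _ hmem⟩ : KB I a i) (1 : K))

/-- The outgoing Koszul differential from homological degree `i`
(the zero map when `i = 0`). -/
def kdOut (I : Ideal (S K n)) (a : Fin n →₀ ℕ) :
    (i : ℕ) → (KB I a i →₀ K) →ₗ[K] (KB I a (i - 1) →₀ K)
  | 0 => 0
  | (i + 1) => kd I a i

/-- The multidegree-`a` component of `Tor_i^S(K, I)`, computed as the `i`-th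
homology of the multidegree-`a` strand of the Koszul complex tensored
with `I`. -/
abbrev Hmod (I : Ideal (S K n)) (a : Fin n →₀ ℕ) (i : ℕ) :=
  ↥(Submodule.map (Submodule.mkQ (LinearMap.range (kd I a i)))
      (LinearMap.ker (kdOut I a i)))

/-- The `i`-th homological shift ideal `HS_i(I)`, generated by the monomials
`x^a` with `Tor_i^S(K, I)_a ≠ 0`. -/
def HSIdeal (i : ℕ) (I : Ideal (S K n)) : Ideal (S K n) :=
  Ideal.span {p | ∃ a : Fin n →₀ ℕ, Nontrivial (Hmod I a i) ∧ p = monomial a 1}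

/-- `I` is a monomial ideal. -/
def IsMonomialIdeal (I : Ideal (S K n)) : Prop :=
  ∃ A : Set (Fin n →₀ ℕ), I = Ideal.span ((fun a => (monomial a 1 : S K n)) '' A)

/-- `I` has a `d`-linear resolution: `Tor_i^S(K,I)_j = 0` whenever `j ≠ i + d`. -/
def LinearRes (d : ℕ) (I : Ideal (S K n)) : Prop :=
  ∀ (i : ℕ) (a : Fin n →₀ ℕ), (a.sum fun _ e => e) ≠ i + d → Subsingleton (Hmod I a i)

/-- The projective dimension of (a finitely generated multigraded module such
as) `I` over `S`: the largest `i` with `Tor_i^S(K, I) ≠ 0`. -/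
def pdim (I : Ideal (S K n)) : ℕ :=
  sSup {i | ∃ a, Nontrivial (Hmod I a i)}

variable (K n)

/-- The graded maximal ideal `𝔪 = (x_1, …, x_n)`. -/
def maxIdl : Ideal (S K n) := Ideal.span (Set.range X)

/-- The `i`-th squarefree power `𝔪^{[i]} = (x_F : F ⊆ [n], |F| = i)`. -/
def sqPow (i : ℕ) : Ideal (S K n) :=
  Ideal.span {p | ∃ F : Finset (Fin n), F.card = i ∧ p = monomial (expF F) 1}

/-- The exponent vector of `α = x_1⋯x_n`. -/
def aexp : Fin n →₀ ℕ := expF (Finset.univ : Finset (Fin n))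

/-- The edge ideal `I(G)` of a graph `G` on `[n]`. -/
def edgeIdeal (G : SimpleGraph (Fin n)) : Ideal (S K n) :=
  Ideal.span {p | ∃ i j, G.Adj i j ∧ p = X i * X j}

/-- The complementary edge ideal `I_c(G)` of a graph `G` on `[n]`. -/
def compIdeal (G : SimpleGraph (Fin n)) : Ideal (S K n) :=
  Ideal.span {p | ∃ i j, G.Adj i j ∧
    p = monomial (aexp n - Finsupp.single i 1 - Finsupp.single j 1) 1}


variable {K} {n}

end

/-! ### Chains on all subsets, and the Koszul strands inside them -/

section Chains

variable {K : Type} [Field K] {n : ℕ}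

/-- The Koszul sign `(-1)^#{x ∈ G | x < j}` of the position of `j` relative to `G`. -/
def sg (K : Type) [Field K] {n : ℕ} (j : Fin n) (G : Finset (Fin n)) : K :=
  (-1) ^ (G.filter (fun x => x < j)).card

theorem sg_mul_self (j : Fin n) (G : Finset (Fin n)) : sg K j G * sg K j G = 1 := by
  unfold sg; rw [← mul_pow]; simp

theorem sg_ne_zero (j : Fin n) (G : Finset (Fin n)) : sg K j G ≠ 0 := by
  unfold sg; exact pow_ne_zero _ (by simp)

theorem sg_insert (j k : Fin n) (G : Finset (Fin n)) (hk : k ∉ G) :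
    sg K j (insert k G) = if k < j then - sg K j G else sg K j G := by
  unfold sg
  rw [Finset.filter_insert]
  split_ifs with h
  · rw [Finset.card_insert_of_notMem (by simp [hk]), pow_succ]; ring
  · rfl

theorem sg_insert_self (j : Fin n) (G : Finset (Fin n)) :
    sg K j (insert j G) = sg K j G := by
  unfold sg; rw [Finset.filter_insert]; simp

theorem sg_erase_self (j : Fin n) (G : Finset (Fin n)) :
    sg K j (G.erase j) = sg K j G := by
  unfold sg; congr 2; ext x; simp; intro h _; exact ne_of_lt h

/-- The simplicial boundary on `K`-valued functions on all subsets of `[n]` (with `f` standing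
for `∑ f(F) e_F`), that is, the contraction sending every `e_j` to `1`. -/
def bd : (Finset (Fin n) → K) →ₗ[K] (Finset (Fin n) → K) where
  toFun f G := ∑ j, if j ∈ G then 0 else sg K j G * f (insert j G)
  map_add' f g := by
    funext G
    simp only [Pi.add_apply, ← Finset.sum_add_distrib]
    refine Finset.sum_congr rfl fun j _ => ?_
    split_ifs <;> ring
  map_smul' c f := by
    funext G
    simp only [Pi.smul_apply, smul_eq_mul, Finset.mul_sum, RingHom.id_apply]
    refine Finset.sum_congr rfl fun j _ => ?_
    split_ifs <;> ring

/-- Exterior multiplication `e_j ∧ -` on functions on subsets. -/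
def wed (j : Fin n) : (Finset (Fin n) → K) →ₗ[K] (Finset (Fin n) → K) where
  toFun f G := if j ∈ G then sg K j G * f (G.erase j) else 0
  map_add' f g := by
    funext G
    simp only [Pi.add_apply]
    split_ifs <;> ring
  map_smul' c f := by
    funext G
    simp only [Pi.smul_apply, smul_eq_mul, RingHom.id_apply]
    split_ifs <;> ring

theorem bd_apply (f : Finset (Fin n) → K) (G : Finset (Fin n)) :
    bd f G = ∑ j, if j ∈ G then 0 else sg K j G * f (insert j G) := rfl

theorem wed_apply (j : Fin n) (f : Finset (Fin n) → K) (G : Finset (Fin n)) :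
    wed j f G = if j ∈ G then sg K j G * f (G.erase j) else 0 := rfl

theorem wed_wed_self (j : Fin n) (f : Finset (Fin n) → K) : wed j (wed j f) = 0 := by
  funext G; simp [wed_apply]

theorem sg_swap (j k : Fin n) (G : Finset (Fin n)) (hjk : j ≠ k) (hj : j ∉ G) (hk : k ∉ G) :
    sg K j (insert k G) * sg K k G = - (sg K k (insert j G) * sg K j G) := by
  rw [sg_insert _ _ _ hk, sg_insert _ _ _ hj]
  rcases lt_or_gt_of_ne hjk with h | h
  · rw [if_neg (not_lt.2 h.le), if_pos h]; ring
  · rw [if_pos h, if_neg (not_lt.2 h.le)]; ring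

theorem wed_anticomm (j k : Fin n) (f : Finset (Fin n) → K) :
    wed j (wed k f) = - wed k (wed j f) := by
  rcases eq_or_ne j k with rfl | hjk
  · simp [wed_wed_self]
  funext G
  by_cases hj : j ∈ G
  · by_cases hk : k ∈ G
    · obtain ⟨H, hjH, hkH, rfl⟩ : ∃ H : Finset (Fin n), j ∉ H ∧ k ∉ H ∧ G = insert j (insert k H) := by
        refine ⟨(G.erase j).erase k, by simp, by simp, ?_⟩
        rw [Finset.insert_erase (by simp [hk, hjk.symm]), Finset.insert_erase hj]
      have e1 : (insert j (insert k H)).erase j = insert k H :=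
        Finset.erase_insert (by simp [hjk, hjH])
      have e2 : (insert j (insert k H)).erase k = insert j H := by
        rw [Finset.insert_comm]; exact Finset.erase_insert (by simp [hjk.symm, hkH])
      have h := sg_swap (K := K) j k H hjk hjH hkH
      have s1 : sg K j (insert j (insert k H)) = sg K j (insert k H) := sg_insert_self _ _
      have s2 : sg K k (insert j (insert k H)) = sg K k (insert j H) := by
        rw [Finset.insert_comm]; exact sg_insert_self _ _
      simp only [Pi.neg_apply, wed_apply, e1, e2, s1, s2, Finset.mem_insert, true_or, or_true,
        if_true, sg_insert_self, Finset.erase_insert hjH, Finset.erase_insert hkH]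
      linear_combination f H * h
    · simp [wed_apply, hk]
  · simp [wed_apply, hj]

/-- The boundary is an antiderivation: `∂(e_j ∧ f) = f - e_j ∧ ∂f`. This is both the contracting
homotopy of a cone with apex `j` and the rule that makes `∑ e_i ∧ e_{i+1}` a cycle. -/
theorem bd_wed (j : Fin n) (f : Finset (Fin n) → K) :
    bd (wed j f) + wed j (bd f) = f := by
  funext G
  simp only [Pi.add_apply]
  by_cases hj : j ∈ G
  · obtain ⟨H, hjH, rfl⟩ : ∃ H : Finset (Fin n), j ∉ H ∧ G = insert j H :=
      ⟨G.erase j, by simp, (Finset.insert_erase hj).symm⟩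
    rw [wed_apply, if_pos hj, Finset.erase_insert hjH, bd_apply, bd_apply, Finset.mul_sum,
      ← Finset.sum_add_distrib, Finset.sum_eq_single j]
    · simp only [hj, hjH, if_true, if_false, sg_insert_self]
      linear_combination f (insert j H) * sg_mul_self (K := K) j H
    · intro k _ hkj
      by_cases hk : k ∈ H
      · simp [hk]
      · have hk' : k ∉ insert j H := by simp [hk, hkj]
        rw [if_neg hk', if_neg hk, wed_apply, if_pos (by simp)]
        have e : (insert k (insert j H)).erase j = insert k H := by
          rw [Finset.insert_comm]; exact Finset.erase_insert (by simp [hkj.symm, hjH])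
        have s : sg K j (insert k (insert j H)) = sg K j (insert k H) := by
          rw [Finset.insert_comm]; exact sg_insert_self _ _
        rw [e, s, sg_insert_self]
        have h2 : sg K k (insert j H) * sg K j (insert k H) + sg K j H * sg K k H = 0 := by
          rw [sg_insert _ _ _ hk, sg_insert _ _ _ hjH]
          rcases lt_or_gt_of_ne hkj with h | h
          · rw [if_pos h, if_neg (not_lt.2 h.le)]; ring
          · rw [if_neg (not_lt.2 h.le), if_pos h]; ring
        linear_combination f (insert k H) * h2
    · simp
  · rw [wed_apply, if_neg hj, add_zero, bd_apply, Finset.sum_eq_single j]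
    · rw [if_neg hj, wed_apply, if_pos (by simp), Finset.erase_insert hj, sg_insert_self,
        ← mul_assoc, sg_mul_self, one_mul]
    · intro k _ hkj
      split_ifs
      · rfl
      · rw [wed_apply, if_neg (by simp [hkj.symm, hj]), mul_zero]
    · simp

/-- `F` is a face of the upper Koszul complex of `I` in multidegree `a`. The conditions defining
`KB I a i` are `F.card = i ∧ IsFace I a F`. -/
def IsFace (I : Ideal (S K n)) (a : Fin n →₀ ℕ) (F : Finset (Fin n)) : Prop :=
  expF F ≤ a ∧ (monomial (a - expF F) (1 : K) : S K n) ∈ I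

/-- Extension by zero of a chain of the Koszul strand to a function on all subsets. -/
noncomputable def ext0 (I : Ideal (S K n)) (a : Fin n →₀ ℕ) (i : ℕ) :
    (KB I a i →₀ K) →ₗ[K] (Finset (Fin n) → K) :=
  (Finsupp.lcoeFun).comp (Finsupp.lmapDomain K K Subtype.val)

theorem ext0_single (I : Ideal (S K n)) (a : Fin n →₀ ℕ) (i : ℕ) (F : KB I a i) (c : K)
    (G : Finset (Fin n)) :
    ext0 I a i (Finsupp.single F c) G = if F.1 = G then c else 0 := by
  classical
  simp [ext0, Finsupp.single_apply]

theorem ext0_inj (I : Ideal (S K n)) (a : Fin n →₀ ℕ) (i : ℕ) :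
    Function.Injective (ext0 I a i) := by
  intro x y h
  apply Finsupp.mapDomain_injective Subtype.val_injective
  exact DFunLike.coe_injective h

theorem ext0_notin (I : Ideal (S K n)) (a : Fin n →₀ ℕ) (i : ℕ) (z : KB I a i →₀ K)
    (G : Finset (Fin n)) (h : ext0 I a i z G ≠ 0) :
    G.card = i ∧ IsFace I a G := by
  by_contra hG
  apply h
  exact Finsupp.mapDomain_of_notMem_range _ _ (by rintro ⟨F, rfl⟩; exact hG F.2)

theorem exists_ext0 (I : Ideal (S K n)) (a : Fin n →₀ ℕ) (i : ℕ) (f : Finset (Fin n) → K)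
    (hf : ∀ G, f G ≠ 0 → G.card = i ∧ IsFace I a G) :
    ∃ z, ext0 I a i z = f := by
  refine ⟨Finsupp.equivFunOnFinite.symm fun F => f F.1, ?_⟩
  funext G
  by_cases hG : G.card = i ∧ IsFace I a G
  · exact (Finsupp.mapDomain_apply Subtype.val_injective _ (⟨G, hG⟩ : KB I a i)).trans (by simp)
  · have : f G = 0 := by by_contra h; exact hG (hf G h)
    rw [this]
    by_contra h
    exact hG (ext0_notin I a i _ G h)

/-- Extension by zero turns the Koszul differential into `bd`; no truncation is needed because
faces are closed under taking subsets. -/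
theorem ext0_kd (I : Ideal (S K n)) (a : Fin n →₀ ℕ) (i : ℕ) (z : KB I a (i + 1) →₀ K) :
    ext0 I a i (kd I a i z) = bd (ext0 I a (i + 1) z) := by
  induction z using Finsupp.induction_linear with
  | zero => simp
  | add f g hf hg => simp only [map_add, hf, hg]
  | single F c =>
    funext G
    rw [kd, Finsupp.lsum_single, LinearMap.toSpanSingleton_apply, map_smul, map_sum,
      Pi.smul_apply, Finset.sum_apply, bd_apply]
    simp only [map_smul, Pi.smul_apply, ext0_single, smul_eq_mul]
    rw [Finset.sum_attach F.1 (fun j => (-1 : K) ^ (F.1.filter (fun x => x < j)).card *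
      (if F.1.erase j = G then 1 else 0)), Finset.mul_sum]
    rw [← Finset.sum_subset (Finset.subset_univ F.1)]
    · refine Finset.sum_congr rfl fun j hj => ?_
      by_cases h : F.1.erase j = G
      · subst h
        rw [if_pos rfl, if_neg (by simp), Finset.insert_erase hj, if_pos rfl, sg_erase_self]
        simp only [sg]; ring
      · rw [if_neg h]
        split_ifs with h1 h2
        · simp
        · exact absurd (by rw [h2]; exact Finset.erase_insert h1) h
        · simp
    · intro j _ hj
      split_ifs with h1 h2
      · rfl
      · exact absurd (by rw [h2]; simp) hj
      · simp

theorem subsingleton_Hmod (I : Ideal (S K n)) (a : Fin n →₀ ℕ) (i : ℕ)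
    (h : ∀ f : Finset (Fin n) → K, (∀ G, f G ≠ 0 → G.card = i + 1 ∧ IsFace I a G) → bd f = 0 →
      ∃ g : Finset (Fin n) → K, (∀ G, g G ≠ 0 → G.card = i + 2 ∧ IsFace I a G) ∧ bd g = f) :
    ¬ Nontrivial (Hmod I a (i + 1)) := by
  rw [Submodule.nontrivial_iff_ne_bot, not_not, ← le_bot_iff, Submodule.map_le_iff_le_comap, Submodule.comap_bot, Submodule.ker_mkQ]
  intro z hz
  have hz0 : kd I a i z = 0 := hz
  obtain ⟨g, hg, hgz⟩ := h (ext0 I a (i + 1) z) (ext0_notin I a (i + 1) z)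
    (by rw [← ext0_kd, hz0, map_zero])
  obtain ⟨w, rfl⟩ := exists_ext0 I a (i + 2) g hg
  exact ⟨w, ext0_inj I a (i + 1) (by rw [ext0_kd, hgz])⟩

theorem nontrivial_Hmod (I : Ideal (S K n)) (a : Fin n →₀ ℕ) (i : ℕ)
    (f : Finset (Fin n) → K) (hf : ∀ G, f G ≠ 0 → G.card = i + 1 ∧ IsFace I a G) (hbd : bd f = 0) (hf0 : f ≠ 0)
    (htop : ∀ G, ¬ (G.card = i + 2 ∧ IsFace I a G)) :
    Nontrivial (Hmod I a (i + 1)) := by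
  rw [Submodule.nontrivial_iff_ne_bot, Ne, ← le_bot_iff, Submodule.map_le_iff_le_comap, Submodule.comap_bot, Submodule.ker_mkQ]
  obtain ⟨z, rfl⟩ := exists_ext0 I a (i + 1) f hf
  intro hle
  have hz : z ∈ LinearMap.ker (kdOut I a (i + 1)) := by
    change kd I a i z = 0
    apply ext0_inj I a i
    rw [ext0_kd, hbd, map_zero]
  obtain ⟨w, hw⟩ := hle hz
  apply hf0
  have : w = 0 := by ext F; exact absurd F.2 (htop F.1)
  rw [← hw, this, map_zero, map_zero]

end Chains

/-! ### The boundary sphere of the even-dimensional cyclic polytope -/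

section Cycle

variable {K : Type} [Field K] {n : ℕ}

theorem wed_wed_apply (p q : Fin n) (f : Finset (Fin n) → K) (G : Finset (Fin n)) :
    (wed p (wed q f)) G = if p ∈ G ∧ q ∈ G.erase p then
      sg K p G * sg K q (G.erase p) * f ((G.erase p).erase q) else 0 := by
  rw [wed_apply, wed_apply]
  by_cases hp : p ∈ G <;> by_cases hq : q ∈ G.erase p <;> simp [hp, hq, mul_assoc]

/-- The initial segment `{0, …, r-1}` of `Fin n`. -/
def seg (n r : ℕ) : Finset (Fin n) := Finset.univ.filter fun x => x.1 < r

theorem mem_seg (r : ℕ) (x : Fin n) : x ∈ seg n r ↔ x.1 < r := by simp [seg]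

theorem card_seg (r : ℕ) (hr : r ≤ n) : (seg n r).card = r := by
  rw [seg, Fin.card_filter_val_lt, min_eq_right hr]

variable [NeZero n]

/-- The product of the factors `1 + e_i ∧ e_{i+1}` for `i < k`, with indices read modulo `n`,
as a function on subsets. -/
noncomputable def cyc (K : Type) [Field K] (n : ℕ) [NeZero n] : ℕ → Finset (Fin n) → K
  | 0 => Pi.single ∅ 1
  | k + 1 => cyc K n k + wed (Fin.ofNat n k) (wed (Fin.ofNat n (k + 1)) (cyc K n k))

/-- The boundary of the partial product telescopes to `(e_k - e_0) ∧ -`. -/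
theorem bd_cyc (k : ℕ) :
    bd (cyc K n k) = wed (Fin.ofNat n k) (cyc K n k) - wed (Fin.ofNat n 0) (cyc K n k) := by
  induction k with
  | zero =>
    rw [sub_self]
    funext G
    rw [bd_apply]
    refine Finset.sum_eq_zero fun j _ => ?_
    split_ifs
    · rfl
    · rw [cyc, Pi.single_eq_of_ne (Finset.insert_ne_empty _ _), mul_zero]
  | succ k ih =>
    rw [cyc]
    set z := cyc K n k
    set p : Fin n := Fin.ofNat n k
    set q : Fin n := Fin.ofNat n (k + 1)
    set o : Fin n := Fin.ofNat n 0
    have h1 : bd (wed p (wed q z)) = wed q z - wed p (bd (wed q z)) :=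
      eq_sub_of_add_eq (bd_wed p (wed q z))
    have h2 : bd (wed q z) = z - wed q (bd z) := eq_sub_of_add_eq (bd_wed q z)
    have h3 : wed p (wed q (wed p z)) = 0 := by
      rw [wed_anticomm q p, map_neg, wed_wed_self, neg_zero]
    have h4 : wed p (wed q (wed o z)) = wed o (wed p (wed q z)) := by
      rw [wed_anticomm q o, map_neg, wed_anticomm p o, neg_neg]
    have h5 : wed q (wed p (wed q z)) = 0 := by
      rw [wed_anticomm q p, wed_wed_self, map_zero, neg_zero]
    simp only [map_add, map_sub, h1, h2, ih, h3, h4, h5]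
    abel

theorem bd_cyc_n : bd (cyc K n n) = 0 := by
  rw [bd_cyc]
  have : Fin.ofNat n n = Fin.ofNat n 0 := by ext; simp
  rw [this, sub_self]

/-- `Matched n F t`: the vertex set `F` of the `n`-cycle is a disjoint union of `t` edges
`{k, k+1}` (indices modulo `n`). -/
inductive Matched (n : ℕ) [NeZero n] : Finset (Fin n) → ℕ → Prop
  | nil : Matched n ∅ 0
  | cons (k : ℕ) (F : Finset (Fin n)) (t : ℕ)
      (hp : Fin.ofNat n k ∈ F) (hq : Fin.ofNat n (k + 1) ∈ F.erase (Fin.ofNat n k))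
      (h : Matched n ((F.erase (Fin.ofNat n k)).erase (Fin.ofNat n (k + 1))) t) :
      Matched n F (t + 1)

theorem Matched.card {F : Finset (Fin n)} {t : ℕ} (h : Matched n F t) : F.card = 2 * t := by
  induction h with
  | nil => rfl
  | cons k F t hp hq h ih =>
    rw [Finset.card_erase_of_mem hq, Finset.card_erase_of_mem hp] at ih
    have := Finset.card_pos.2 ⟨_, hq⟩
    rw [Finset.card_erase_of_mem hp] at this
    omega

theorem cyc_matched (k : ℕ) (F : Finset (Fin n)) (h : cyc K n k F ≠ 0) :
    ∃ t, Matched n F t := by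
  induction k generalizing F with
  | zero =>
    have : F = ∅ := by
      by_contra hF
      exact h (Pi.single_eq_of_ne hF _)
    subst this
    exact ⟨0, .nil⟩
  | succ k ih =>
    rw [cyc, Pi.add_apply, wed_wed_apply] at h
    by_cases h0 : cyc K n k F = 0
    · rw [h0, zero_add] at h
      split_ifs at h with h1
      · obtain ⟨t, ht⟩ := ih _ (right_ne_zero_of_mul h)
        exact ⟨t + 1, .cons k F t h1.1 h1.2 ht⟩
      · exact absurd rfl h
    · exact ih F h0

/-- The factors with `i < k` only involve the vertices `0, …, k`. -/
theorem cyc_eq_zero (k : ℕ) (F : Finset (Fin n)) (x : Fin n) (hx : x ∈ F) (hk : k < x) :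
    cyc K n k F = 0 := by
  induction k generalizing F with
  | zero => exact Pi.single_eq_of_ne (Finset.ne_empty_of_mem hx) _
  | succ k ih =>
    have hxn := x.2
    rw [cyc, Pi.add_apply, ih F hx (by omega), wed_wed_apply, ih, mul_zero, ite_self, add_zero]
    · simp only [Finset.mem_erase, hx, and_true]
      constructor <;> intro h <;> rw [h, Fin.val_ofNat] at hk
      · have := Nat.mod_le (k + 1) n
        omega
      · have := Nat.mod_le k n
        omega
    · omega

/-- An initial segment of even size `2r < n` has only one perfect matching, so its coefficient
is a sign as soon as the edge `{2r-2, 2r-1}` has been used; the wrap-around edge does not interfere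
as `n - 1` is outside the segment. -/
theorem cyc_seg_ne_zero (r : ℕ) (hr : 2 * r < n) (k : ℕ) (hk : 2 * r ≤ k + 1) (hkn : k ≤ n) :
    cyc K n k (seg n (2 * r)) ≠ 0 := by
  induction r generalizing k with
  | zero =>
    have hs : seg n (2 * 0) = ∅ := by ext x; simp [mem_seg]
    rw [hs]
    clear hr hk hkn hs
    induction k with
    | zero => simp [cyc]
    | succ k ih => rw [cyc, Pi.add_apply, wed_wed_apply]; simpa using ih
  | succ r ihr =>
    induction k, (show 2 * r + 1 ≤ k by omega) using Nat.le_induction with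
    | base =>
      have hp : (Fin.ofNat n (2 * r)).1 = 2 * r := by
        rw [Fin.val_ofNat, Nat.mod_eq_of_lt (by omega)]
      have hq : (Fin.ofNat n (2 * r + 1)).1 = 2 * r + 1 := by
        rw [Fin.val_ofNat, Nat.mod_eq_of_lt (by omega)]
      rw [cyc, Pi.add_apply, cyc_eq_zero (2 * r) _ (Fin.ofNat n (2 * r + 1))
        (by rw [mem_seg, hq]; omega) (by rw [hq]; omega), zero_add, wed_wed_apply, if_pos]
      · have hs : ((seg n (2 * (r + 1))).erase (Fin.ofNat n (2 * r))).erase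
            (Fin.ofNat n (2 * r + 1)) = seg n (2 * r) := by
          ext x
          simp only [Finset.mem_erase, mem_seg, Ne, Fin.ext_iff, hp, hq]
          omega
        rw [hs]
        exact mul_ne_zero (mul_ne_zero (sg_ne_zero _ _) (sg_ne_zero _ _))
          (ihr (by omega) _ (by omega) (by omega))
      · simp only [Finset.mem_erase, mem_seg, Ne, Fin.ext_iff, hp, hq]
        omega
    | succ k hk' ih =>
      rw [cyc, Pi.add_apply, wed_wed_apply, if_neg, add_zero]
      · exact ih (by omega) (by omega)
      · have hp : (Fin.ofNat n k).1 = k := by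
          rw [Fin.val_ofNat, Nat.mod_eq_of_lt (by omega)]
        rintro ⟨h1, h2⟩
        have h2 := Finset.mem_of_mem_erase h2
        rw [mem_seg, hp] at h1
        rw [mem_seg, Fin.val_ofNat, Nat.mod_eq_of_lt (by omega)] at h2
        omega

/-- The part of `cyc K n n` carried by the subsets of cardinality `d`. -/
noncomputable def cycPart (K : Type) [Field K] (n : ℕ) [NeZero n] (d : ℕ) : Finset (Fin n) → K :=
  fun F => if F.card = d then cyc K n n F else 0

theorem bd_cycPart (d : ℕ) : bd (cycPart K n d) = 0 := by
  funext G
  by_cases hG : G.card + 1 = d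
  · rw [← bd_cyc_n (K := K) (n := n), bd_apply, bd_apply]
    refine Finset.sum_congr rfl fun j _ => ?_
    split_ifs with h
    · rfl
    · rw [cycPart, if_pos (by rw [Finset.card_insert_of_notMem h, hG])]
  · rw [bd_apply]
    refine Finset.sum_eq_zero fun j _ => ?_
    split_ifs with h
    · rfl
    · rw [cycPart, if_neg (by rw [Finset.card_insert_of_notMem h]; exact hG), mul_zero]

theorem cycPart_ne_zero (t : ℕ) (ht : 2 * t < n) : cycPart K n (2 * t) ≠ 0 := by
  intro h
  have := congrFun h (seg n (2 * t))
  rw [cycPart, if_pos (card_seg _ ht.le)] at this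
  exact cyc_seg_ne_zero t ht n (by omega) le_rfl this

end Cycle

/-! ### Monomials in powers of the complementary edge ideal -/

section Exponents

variable {K : Type} [Field K] {n : ℕ}

theorem expF_apply (F : Finset (Fin n)) (j : Fin n) : expF F j = if j ∈ F then 1 else 0 := by
  simp [expF, Finsupp.finsetSum_apply, Finsupp.single_apply]

theorem aexp_apply (j : Fin n) : aexp n j = 1 := by simp [aexp, expF_apply]

theorem sum_expF (F : Finset (Fin n)) : ∑ j, expF F j = F.card := by
  simp [expF_apply]

theorem monomial_mem_of_le {I : Ideal (S K n)} {g b : Fin n →₀ ℕ} (h : g ≤ b)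
    (hg : (monomial g (1 : K) : S K n) ∈ I) : (monomial b (1 : K) : S K n) ∈ I := by
  rw [← tsub_add_cancel_of_le h, ← one_mul (1 : K), ← monomial_mul]
  exact Ideal.mul_mem_left _ _ hg

/-- A monomial in `I_c(G)^s` is divisible by a product of `s` generators; such a product has all
exponents at most `s` and degree at least `s(n-2)`. -/
theorem exists_le_of_mem (G : SimpleGraph (Fin n)) (s : ℕ) (b : Fin n →₀ ℕ)
    (hb : (monomial b (1 : K) : S K n) ∈ compIdeal K n G ^ s) :
    ∃ g ≤ b, (monomial g (1 : K) : S K n) ∈ compIdeal K n G ^ s ∧ (∀ j, g j ≤ s) ∧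
      s * n ≤ ∑ j, g j + 2 * s := by
  set B : ℕ → Set (Fin n →₀ ℕ) := fun s =>
    {g | (monomial g (1 : K) : S K n) ∈ compIdeal K n G ^ s ∧ (∀ j, g j ≤ s) ∧
      s * n ≤ ∑ j, g j + 2 * s} with hB
  have key : compIdeal K n G ^ s ≤ Ideal.span ((fun a => (monomial a (1 : K) : S K n)) '' B s) := by
    clear hb
    induction s with
    | zero =>
      rw [pow_zero, Ideal.one_eq_top, top_le_iff, Ideal.eq_top_iff_one]
      exact Ideal.subset_span ⟨0, ⟨by simp, by simp, by simp⟩, rfl⟩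
    | succ s ih =>
      rw [pow_succ]
      refine (Ideal.mul_mono_left ih).trans ?_
      conv_lhs => rw [compIdeal]
      rw [Ideal.span_mul_span', Ideal.span_le]
      rintro _ ⟨_, ⟨g, ⟨hg1, hg2, hg3⟩, rfl⟩, _, ⟨i, j, hij, rfl⟩, rfl⟩
      refine Ideal.subset_span ⟨g + (aexp n - Finsupp.single i 1 - Finsupp.single j 1),
        ⟨?_, ?_, ?_⟩, by simp [monomial_mul]⟩
      · rw [← one_mul (1 : K), ← monomial_mul, pow_succ]
        exact Ideal.mul_mem_mul hg1 (Ideal.subset_span ⟨i, j, hij, rfl⟩)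
      · intro k
        have := hg2 k
        simp only [Finsupp.add_apply, Finsupp.tsub_apply, aexp_apply]
        omega
      · have h1 : ∀ k, 1 ≤ (aexp n - Finsupp.single i 1 - Finsupp.single j 1 : Fin n →₀ ℕ) k +
            ((Finsupp.single i 1 : Fin n →₀ ℕ) k + (Finsupp.single j 1 : Fin n →₀ ℕ) k) := by
          intro k
          simp only [Finsupp.tsub_apply, aexp_apply]
          omega
        have h2 := Finset.sum_le_sum fun k (_ : k ∈ Finset.univ) => h1 k
        have h3 : ∀ i : Fin n, ∑ k, (Finsupp.single i 1 : Fin n →₀ ℕ) k = 1 := by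
          intro i; simp [Finsupp.single_apply]
        rw [Finset.sum_add_distrib, Finset.sum_add_distrib, h3, h3] at h2
        simp only [Finset.sum_const, Finset.card_univ, Fintype.card_fin, smul_eq_mul,
          mul_one] at h2
        simp only [Finsupp.add_apply, Finset.sum_add_distrib]
        nlinarith
  obtain ⟨g, hg, hgb⟩ := mem_ideal_span_monomial_image.1 (key hb) b (by simp [mem_support_iff])
  exact ⟨g, hgb, hg⟩

/-- An exponent `a_j > s` makes `j` a cone point of the upper Koszul complex. -/
theorem isFace_insert (G : SimpleGraph (Fin n)) (s : ℕ) (a : Fin n →₀ ℕ) (j : Fin n)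
    (hj : s < a j) (F : Finset (Fin n)) (hjF : j ∉ F) (hF : IsFace (compIdeal K n G ^ s) a F) :
    IsFace (compIdeal K n G ^ s) a (insert j F) := by
  obtain ⟨h1, h2⟩ := hF
  obtain ⟨g, hg, hgI, hgs, -⟩ := exists_le_of_mem G s _ h2
  constructor
  · intro k
    have := h1 k
    rw [expF_apply] at this ⊢
    by_cases hk : k = j
    · subst hk; simp; omega
    · simpa [hk] using this
  · refine monomial_mem_of_le (fun k => ?_) hgI
    have h3 := hg k
    rw [Finsupp.tsub_apply, expF_apply] at h3 ⊢
    by_cases hk : k = j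
    · subst hk
      have := hgs k
      simp; omega
    · simpa [hk] using h3

theorem IsFace.card_add_le (G : SimpleGraph (Fin n)) (s : ℕ) (a : Fin n →₀ ℕ)
    (F : Finset (Fin n)) (hF : IsFace (compIdeal K n G ^ s) a F) :
    F.card + s * n ≤ ∑ j, a j + 2 * s := by
  obtain ⟨h1, h2⟩ := hF
  obtain ⟨g, hg, -, -, hd⟩ := exists_le_of_mem G s _ h2
  have h3 : ∑ j, (g j + expF F j) ≤ ∑ j, a j := by
    refine Finset.sum_le_sum fun j _ => ?_
    have h4 := hg j
    have h5 := h1 j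
    rw [Finsupp.tsub_apply] at h4
    omega
  rw [Finset.sum_add_distrib, sum_expF] at h3
  omega

/-- Vanishing of `Tor_{i+1}` for `i + 1 > 2s` (cone, or no faces for degree reasons) and for
`i + 1 ≥ n` (the only possible face `[n]` has nonzero boundary). -/
theorem not_nontrivial_of_lt [NeZero n] (G : SimpleGraph (Fin n)) (s : ℕ) (a : Fin n →₀ ℕ) (i : ℕ)
    (hi : 2 * s < i + 1 ∨ n ≤ i + 1) :
    ¬ Nontrivial (Hmod (compIdeal K n G ^ s) a (i + 1)) := by
  apply subsingleton_Hmod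
  intro f hf hbd
  by_cases ha : ∃ j, s < a j
  · obtain ⟨j, hj⟩ := ha
    refine ⟨wed j f, fun F hF => ?_, ?_⟩
    · rw [wed_apply] at hF
      split_ifs at hF with hjF
      · obtain ⟨h1, h2⟩ := hf _ (right_ne_zero_of_mul hF)
        have h3 := isFace_insert G s a j hj _ (by simp) h2
        rw [Finset.insert_erase hjF] at h3
        refine ⟨?_, h3⟩
        rw [Finset.card_erase_of_mem hjF] at h1
        omega
      · exact absurd rfl hF
    · have := bd_wed j f
      rwa [hbd, map_zero, add_zero] at this
  · push Not at ha
    refine ⟨0, by simp, ?_⟩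
    rw [map_zero]
    symm
    funext F
    by_contra hF
    obtain ⟨h1, h2⟩ := hf F hF
    rcases hi with hi | hi
    · have h3 := h2.card_add_le
      have h4 : ∑ j, a j ≤ n * s := by
        simpa using Finset.sum_le_sum fun j (_ : j ∈ Finset.univ) => ha j
      rw [mul_comm n s] at h4
      omega
    · have hu : F = Finset.univ := by
        rw [← Finset.card_eq_iff_eq_univ, Fintype.card_fin]
        have := Finset.card_le_univ F
        rw [Fintype.card_fin] at this
        omega
      subst hu
      have h5 := congrFun hbd (Finset.univ.erase 0)
      rw [bd_apply, Finset.sum_eq_single 0] at h5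
      · rw [if_neg (by simp), Finset.insert_erase (Finset.mem_univ _)] at h5
        exact mul_ne_zero (sg_ne_zero _ _) hF h5
      · intro j _ hj; rw [if_pos (by simp [hj])]
      · simp

/-- If `F` is a disjoint union of `t` edges, then `x_{[n]}^t / x_F` is the product of the
corresponding generators. -/
theorem Matched.exists_exponent [NeZero n] (G : SimpleGraph (Fin n))
    (hG : ∀ k : ℕ, G.Adj (Fin.ofNat n k) (Fin.ofNat n (k + 1)))
    {F : Finset (Fin n)} {t : ℕ} (h : Matched n F t) :
    ∃ b : Fin n →₀ ℕ, b + expF F = t • aexp n ∧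
      (monomial b (1 : K) : S K n) ∈ compIdeal K n G ^ t := by
  induction h with
  | nil => exact ⟨0, by simp [expF], by simp⟩
  | cons k F t hp hq h ih =>
    obtain ⟨b, hb, hbI⟩ := ih
    refine ⟨b + (aexp n - Finsupp.single (Fin.ofNat n k) 1 -
      Finsupp.single (Fin.ofNat n (k + 1)) 1), ?_, ?_⟩
    · ext j
      have h1 := DFunLike.congr_fun hb j
      simp only [Finsupp.add_apply, expF_apply, Finsupp.smul_apply, aexp_apply, smul_eq_mul,
        mul_one, Finsupp.tsub_apply, Finsupp.single_apply, Finset.mem_erase, Ne] at h1 hq ⊢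
      generalize Fin.ofNat n k = p at *
      generalize Fin.ofNat n (k + 1) = q at *
      by_cases h2 : j = p
      · subst h2
        simp [hp, hq.1, Ne.symm hq.1] at h1 ⊢
        omega
      · by_cases h3 : j = q
        · subst h3
          simp [hq.2, h2, Ne.symm h2] at h1 ⊢
          omega
        · simp [h2, h3, Ne.symm h2, Ne.symm h3] at h1 ⊢
          omega
    · rw [← one_mul (1 : K), ← monomial_mul, pow_succ]
      exact Ideal.mul_mem_mul hbI (Ideal.subset_span ⟨_, _, hG k, rfl⟩)

/-- `Tor_{2t} ≠ 0` in the multidegree of `x_{[n]}^t (x_{[n]}/(x_0 x_1))^{s-t}`: there the faces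
have at most `2t` elements, and all `t`-matched sets are faces, so the cycle `cycPart K n (2t)` is
not a boundary. -/
theorem nontrivial_of_le [NeZero n] (G : SimpleGraph (Fin n))
    (hG : ∀ k : ℕ, G.Adj (Fin.ofNat n k) (Fin.ofNat n (k + 1)))
    (s t : ℕ) (ht : 1 ≤ t) (hts : t ≤ s) (htn : 2 * t < n) :
    ∃ a, Nontrivial (Hmod (compIdeal K n G ^ s) a (2 * t)) := by
  obtain ⟨r, rfl⟩ := Nat.exists_eq_add_of_le hts
  obtain ⟨i, hi⟩ : ∃ i, 2 * t = i + 1 := ⟨2 * t - 1, by omega⟩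
  set p : Fin n := Fin.ofNat n 0
  set q : Fin n := Fin.ofNat n (0 + 1)
  have hpq : p ≠ q := (hG 0).ne
  set u : Fin n →₀ ℕ := aexp n - Finsupp.single p 1 - Finsupp.single q 1 with hu
  have huI : (monomial u (1 : K) : S K n) ∈ compIdeal K n G :=
    Ideal.subset_span ⟨_, _, hG 0, rfl⟩
  have hu2 : u + (Finsupp.single p 1 + Finsupp.single q 1) = aexp n := by
    ext j
    simp only [hu, Finsupp.add_apply, aexp_apply, Finsupp.tsub_apply, Finsupp.single_apply]
    by_cases h2 : p = j
    · have : q ≠ j := fun h => hpq (h2.trans h.symm)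
      simp [h2, this]
    · by_cases h3 : q = j <;> simp [h2, h3]
  have hsu : ∑ j, u j + 2 = n := by
    have h := congrArg (fun v : Fin n →₀ ℕ => ∑ j, v j) hu2
    simpa [Finset.sum_add_distrib, Finsupp.single_apply, aexp_apply] using h
  refine ⟨t • aexp n + r • u, ?_⟩
  rw [hi]
  refine nontrivial_Hmod _ _ _ (cycPart K n (2 * t)) (fun F hF => ?_) (bd_cycPart _)
    (cycPart_ne_zero t htn) ?_
  · rw [cycPart] at hF
    split_ifs at hF with hc
    · obtain ⟨t', ht'⟩ := cyc_matched _ _ hF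
      obtain rfl : t' = t := by have := ht'.card; omega
      obtain ⟨b, hb, hbI⟩ := ht'.exists_exponent (K := K) G hG
      have hba : b + r • u + expF F = t' • aexp n + r • u := by rw [← hb]; abel
      refine ⟨by omega, ?_, ?_⟩
      · rw [← hba]; exact le_add_of_nonneg_left bot_le
      · rw [← hba, add_tsub_cancel_right, ← one_mul (1 : K), ← monomial_mul, pow_add]
        refine Ideal.mul_mem_mul hbI ?_
        have := Ideal.pow_mem_pow huI r
        rwa [monomial_pow, one_pow] at this
    · exact absurd rfl hF
  · rintro F ⟨hc, hF⟩
    have h := hF.card_add_le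
    simp only [Finsupp.add_apply, Finsupp.smul_apply, aexp_apply, smul_eq_mul, mul_one,
      Finset.sum_add_distrib, ← Finset.mul_sum, Finset.sum_const, Finset.card_univ,
      Fintype.card_fin] at h
    rw [hc] at h
    have h6 : r * ∑ j, u j + 2 * r = r * n := by rw [mul_comm 2 r, ← mul_add, hsu]
    have h7 : (t + r) * n = n * t + r * n := by ring
    omega

theorem pdim_eq [NeZero n] (G : SimpleGraph (Fin n))
    (hG : ∀ k : ℕ, G.Adj (Fin.ofNat n k) (Fin.ofNat n (k + 1)))
    (s t : ℕ) (ht : 1 ≤ t) (hts : t ≤ s) (htn : 2 * t < n) (h : t = s ∨ n = 2 * t + 1) :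
    pdim (compIdeal K n G ^ s) = 2 * t := by
  refine IsGreatest.csSup_eq ⟨nontrivial_of_le G hG s t ht hts htn, ?_⟩
  rintro i ⟨a, ha⟩
  by_contra hlt
  obtain ⟨i, rfl⟩ : ∃ j, i = j + 1 := ⟨i - 1, by omega⟩
  exact not_nontrivial_of_lt G s a i (by omega) ha

end Exponents

/-- For the odd cycle `G` with `2m+1` vertices (`m ≥ 1`),
`pd(I_c(G)^s) = 2s` for `s ∈ [m]` and `pd(I_c(G)^s) = 2m` for `s > m`. -/
theorem pdim_compIdeal_pow_odd_cycle
    (K : Type) [Field K] (m : ℕ) (hm : 1 ≤ m) (G : SimpleGraph (Fin (2 * m + 1)))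
    (hadj : ∀ i j : Fin (2 * m + 1), G.Adj i j ↔
      ((j : ℕ) = ((i : ℕ) + 1) % (2 * m + 1) ∨
        (i : ℕ) = ((j : ℕ) + 1) % (2 * m + 1))) :
    (∀ s : ℕ, 1 ≤ s → s ≤ m → pdim (compIdeal K (2 * m + 1) G ^ s) = 2 * s) ∧
    (∀ s : ℕ, m < s → pdim (compIdeal K (2 * m + 1) G ^ s) = 2 * m) := by
  have hG : ∀ k : ℕ, G.Adj (Fin.ofNat (2 * m + 1) k) (Fin.ofNat (2 * m + 1) (k + 1)) := by
    intro k
    rw [hadj]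
    left
    simp
  refine ⟨fun s hs hsm => ?_, fun s hs => ?_⟩
  · exact pdim_eq G hG s s hs le_rfl (by omega) (Or.inl rfl)
  · exact pdim_eq G hG s m hm hs.le (by omega) (Or.inr rfl)

end Paper
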